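/- arXiv:2506.06231 — 3 statements merged into one kernel-verified Lean document; each statement's English description precedes it below -/
import Mathlib

section
/- Let n ≥ 1 and let K1, K2 be n×n real positive semidefinite matrices satisfying (1/n)·trace(K2) ≤ 1, and set Λ = (1/n)(K1 − K2). Let I be a nonempty proper subset of {1,…,n} and suppose ε1, ε2 ≥ 0 satisfy ‖(1/n)K1[I,Iᶜ]‖_F ≤ ε1 and ‖(1/n)K2[I,I]‖_2 ≤ ε2. Let v_1,…,v_n be an orthonormal basis of ℝⁿ consisting of eigenvectors of the symmetric matrix Λ with corresponding eigenvalues λ_1,…,λ_n, and for each i let λ_i^I be an eigenvalue of the principal submatrix Λ[I,I] at minimal distance from λ_i, and λ_i^{Iᶜ} an eigenvalue of Λ[Iᶜ,Iᶜ] at minimal distance from λ_i. Then Σ_{i=1}^{n} ( (λ_i − λ_i^I)² · ‖v_i[I]‖₂² + (λ_i − λ_i^{Iᶜ})² · ‖v_i[Iᶜ]‖₂² ) ≤ 4(ε1² + ε2). -/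
/-!
Write `S` for `I` or its complement. The rows in `S` of the equation `Λ v_i = λ_i v_i` read
`(λ_i - Λ[S,S]) v_i[S] = Λ[S,Sᶜ] v_i[Sᶜ]`. Since `Λ[S,S]` is symmetric, the left side has norm at
least `dist (λ_i, spec Λ[S,S]) * ‖v_i[S]‖` (`dist_sq_mul_le`). Squaring and summing over `i`, the
right sides add up to `‖Λ[S,Sᶜ]‖_F²` because the `v_i` form an orthonormal basis (`half_bound`).
The sum in question is therefore at most `2 ‖Λ[I,Iᶜ]‖_F²`, hence at most
`4 (‖K1[I,Iᶜ]/n‖_F² + ‖K2[I,Iᶜ]/n‖_F²)`.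

The first term is bounded by `ε1²` by hypothesis. For the second, a positive semidefinite matrix `A`
satisfies `‖A[I,j]‖² ≤ ‖A[I,I]‖_2 * A j j` for each column `j` (`posSemidef_col_bound`), by
Cauchy–Schwarz for the form of `A`; summing over `j ∉ I` gives at most
`ε2 * trace (K2 / n) ≤ ε2`.
-/

open Matrix

/-- Frobenius norm of a real matrix. -/
noncomputable def frobNorm {m n : Type*} [Fintype m] [Fintype n] (M : Matrix m n ℝ) : ℝ :=
  Real.sqrt (∑ i, ∑ j, (M i j) ^ 2)

/-- The ℓ2-operator (spectral) norm of a real matrix, as the operator norm of the induced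
linear map between Euclidean spaces. -/
noncomputable def l2OpNorm {m n : Type*} [Fintype m] [Fintype n] [DecidableEq n]
    (M : Matrix m n ℝ) : ℝ :=
  ‖LinearMap.toContinuousLinearMap (Matrix.toEuclideanLin M)‖

/-- `μ` is an eigenvalue of the real square matrix `M`. -/
def IsEigenvalue {n : Type*} [Fintype n] (M : Matrix n n ℝ) (μ : ℝ) : Prop :=
  ∃ x : n → ℝ, x ≠ 0 ∧ M.mulVec x = μ • x

/-- A symmetric matrix `M` satisfies `dist (l, spec M) * ‖x‖ ≤ ‖(l - M) x‖`, by expanding `x` in an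
orthonormal eigenbasis. Here `μ` is a number at most as far from `l` as any eigenvalue. -/
lemma dist_sq_mul_le {m : Type*} [Fintype m] [DecidableEq m] (M : Matrix m m ℝ)
    (hM : M.IsHermitian) (l μ : ℝ) (hμ : ∀ ν, IsEigenvalue M ν → |l - μ| ≤ |l - ν|)
    (x : m → ℝ) :
    (l - μ) ^ 2 * ∑ i, x i ^ 2 ≤ ∑ i, (l * x i - M.mulVec x i) ^ 2 := by
  set b := hM.eigenvectorBasis with hb
  have hparseval : ∀ y : m → ℝ, ∑ i, y i ^ 2 = ∑ k, ((b k).ofLp ⬝ᵥ y) ^ 2 := by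
    intro y
    have h := b.sum_sq_norm_inner_right (WithLp.toLp 2 y)
    rw [EuclideanSpace.norm_sq_eq] at h
    simp only [Real.norm_eq_abs, sq_abs] at h
    rw [← h]
    refine Finset.sum_congr rfl fun k _ => ?_
    rw [EuclideanSpace.inner_eq_star_dotProduct, dotProduct_comm]
    simp
  have hcoord : ∀ k, (b k).ofLp ⬝ᵥ (fun i => l * x i - M.mulVec x i)
      = (l - hM.eigenvalues k) * ((b k).ofLp ⬝ᵥ x) := by
    intro k
    have h1 : (fun i => l * x i - M.mulVec x i) = l • x - M *ᵥ x := by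
      ext i; simp
    have h2 : (b k).ofLp ⬝ᵥ (M *ᵥ x) = hM.eigenvalues k * ((b k).ofLp ⬝ᵥ x) := by
      have hT : Mᵀ = M := by simpa using hM.eq
      rw [dotProduct_mulVec, ← mulVec_transpose, hT, hM.mulVec_eigenvectorBasis k,
        smul_dotProduct, smul_eq_mul]
    rw [h1, dotProduct_sub, dotProduct_smul, h2, smul_eq_mul]
    ring
  rw [hparseval x, hparseval (fun i => l * x i - M.mulVec x i), Finset.mul_sum]
  refine Finset.sum_le_sum fun k _ => ?_
  rw [hcoord k, mul_pow]
  refine mul_le_mul_of_nonneg_right ?_ (sq_nonneg _)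
  refine sq_le_sq.mpr (hμ _ ⟨(b k).ofLp, ?_, hM.mulVec_eigenvectorBasis k⟩)
  intro h0
  exact b.toBasis.ne_zero k (by simpa using (WithLp.ofLp_eq_zero 2).mp h0)

/-- Parseval: `∑ i, ⟨w, v_i⟩² = ‖w‖²` for a vector `w` supported on `T`. -/
lemma sum_sq_orthonormal {n : ℕ} (v : Fin n → (Fin n → ℝ))
    (horth : ∀ i j, (∑ k, v i k * v j k) = if i = j then (1 : ℝ) else 0)
    (T : Finset (Fin n)) (w : Fin n → ℝ) :
    ∑ i, (∑ k ∈ T, w k * v i k) ^ 2 = ∑ k ∈ T, w k ^ 2 := by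
  have h1 : Matrix.of v * (Matrix.of v)ᵀ = 1 := by
    ext i j
    simp [Matrix.mul_apply, horth, Matrix.one_apply]
  have h2 : ∀ j k, ∑ i, v i j * v i k = if j = k then (1 : ℝ) else 0 := by
    intro j k
    have h3 : (Matrix.of v)ᵀ * Matrix.of v = 1 := mul_eq_one_comm.mp h1
    have := congrFun (congrFun h3 j) k
    simpa [Matrix.mul_apply, Matrix.one_apply] using this
  calc ∑ i, (∑ k ∈ T, w k * v i k) ^ 2
      = ∑ i, ∑ j ∈ T, ∑ k ∈ T, w j * w k * (v i j * v i k) := by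
        refine Finset.sum_congr rfl fun i _ => ?_
        rw [sq, Finset.sum_mul_sum]
        refine Finset.sum_congr rfl fun j _ => Finset.sum_congr rfl fun k _ => by ring
    _ = ∑ j ∈ T, ∑ k ∈ T, w j * w k * ∑ i, v i j * v i k := by
        rw [Finset.sum_comm]
        refine Finset.sum_congr rfl fun j _ => ?_
        rw [Finset.sum_comm]
        refine Finset.sum_congr rfl fun k _ => ?_
        rw [Finset.mul_sum]
    _ = ∑ k ∈ T, w k ^ 2 := by
        refine Finset.sum_congr rfl fun j hj => ?_
        simp [h2, hj, sq]

/-- The contribution of one of the two blocks is at most the squared Frobenius norm of the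
off-diagonal block of `Λ`. -/
lemma half_bound {n : ℕ} (Λ : Matrix (Fin n) (Fin n) ℝ) (hΛ : Λ.IsHermitian)
    (S : Finset (Fin n)) (v : Fin n → (Fin n → ℝ)) (lam : Fin n → ℝ)
    (horth : ∀ i j, (∑ k, v i k * v j k) = if i = j then (1 : ℝ) else 0)
    (heig : ∀ i, Λ.mulVec (v i) = lam i • v i) (lamS : Fin n → ℝ)
    (hlamS : ∀ i, ∀ μ,
      IsEigenvalue (Matrix.of fun (a : {x // x ∈ S}) (b : {x // x ∈ S}) => Λ a.1 b.1) μ →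
        |lam i - lamS i| ≤ |lam i - μ|) :
    ∑ i, (lam i - lamS i) ^ 2 * (∑ j ∈ S, (v i j) ^ 2)
      ≤ ∑ a ∈ S, ∑ k ∈ Sᶜ, Λ a k ^ 2 := by
  have hM : (Matrix.of fun (a : {x // x ∈ S}) (b : {x // x ∈ S}) => Λ a.1 b.1).IsHermitian :=
    hΛ.submatrix Subtype.val
  have key : ∀ i, (lam i - lamS i) ^ 2 * (∑ j ∈ S, (v i j) ^ 2)
      ≤ ∑ a ∈ S, (∑ k ∈ Sᶜ, Λ a k * v i k) ^ 2 := by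
    intro i
    have h := dist_sq_mul_le _ hM (lam i) (lamS i) (hlamS i) (fun a => v i a.1)
    rw [Finset.sum_coe_sort S (fun j => v i j ^ 2)] at h
    refine h.trans (le_of_eq ?_)
    rw [← Finset.sum_coe_sort S (fun a => (∑ k ∈ Sᶜ, Λ a k * v i k) ^ 2)]
    refine Finset.sum_congr rfl fun a _ => ?_
    have h1 : lam i * v i a.1 = ∑ k, Λ a.1 k * v i k := by
      simpa [Matrix.mulVec, dotProduct] using (congrFun (heig i) a.1).symm
    have h2 : (Matrix.of fun (a : {x // x ∈ S}) (b : {x // x ∈ S}) => Λ a.1 b.1).mulVec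
        (fun a => v i a.1) a = ∑ k ∈ S, Λ a.1 k * v i k := by
      rw [← Finset.sum_coe_sort S]
      rfl
    rw [h1, h2, ← Finset.sum_add_sum_compl S, add_sub_cancel_left]
  refine (Finset.sum_le_sum fun i _ => key i).trans (le_of_eq ?_)
  rw [Finset.sum_comm]
  exact Finset.sum_congr rfl fun a _ => sum_sq_orthonormal v horth Sᶜ (Λ a)

/-- The quadratic form of a matrix is bounded by its spectral norm. -/
lemma dotProduct_mulVec_le_l2OpNorm {m : Type*} [Fintype m] [DecidableEq m] (M : Matrix m m ℝ)
    (x : m → ℝ) : x ⬝ᵥ M *ᵥ x ≤ l2OpNorm M * ∑ i, x i ^ 2 := by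
  set X : EuclideanSpace ℝ m := WithLp.toLp 2 x
  have hX : ‖X‖ ^ 2 = ∑ i, x i ^ 2 := by
    rw [EuclideanSpace.norm_sq_eq]; simp [X]
  have h1 : x ⬝ᵥ M *ᵥ x = inner ℝ X (Matrix.toEuclideanLin M X) := by
    rw [EuclideanSpace.inner_eq_star_dotProduct, dotProduct_comm]
    simp [X]
  have h2 : ‖Matrix.toEuclideanLin M X‖ ≤ l2OpNorm M * ‖X‖ :=
    (LinearMap.toContinuousLinearMap (Matrix.toEuclideanLin M)).le_opNorm X
  rw [h1, ← hX]
  calc inner ℝ X (Matrix.toEuclideanLin M X) ≤ ‖X‖ * ‖Matrix.toEuclideanLin M X‖ :=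
        real_inner_le_norm _ _
    _ ≤ ‖X‖ * (l2OpNorm M * ‖X‖) := by gcongr
    _ = l2OpNorm M * ‖X‖ ^ 2 := by ring

/-- Each column `j` of a positive semidefinite `A` satisfies `‖A[I,j]‖² ≤ ‖A[I,I]‖_2 * A j j`. -/
lemma posSemidef_col_bound {n : ℕ} (A : Matrix (Fin n) (Fin n) ℝ) (hA : A.PosSemidef)
    (I : Finset (Fin n)) (ε : ℝ)
    (hε : l2OpNorm (Matrix.of fun (i : {x // x ∈ I}) (j : {x // x ∈ I}) => A i.1 j.1) ≤ ε)
    (j : Fin n) : ∑ i ∈ I, A i j ^ 2 ≤ ε * A j j := by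
  have hε0 : 0 ≤ ε := (norm_nonneg _).trans hε
  have hAjj : 0 ≤ A j j := hA.diag_nonneg
  set U := ∑ i ∈ I, A i j ^ 2 with hU
  have hU0 : 0 ≤ U := Finset.sum_nonneg fun i _ => sq_nonneg _
  have hT : Aᵀ = A := by simpa using hA.isHermitian.eq
  set u : Fin n → ℝ := fun i => if i ∈ I then A i j else 0 with hu
  have huAu : u ⬝ᵥ A *ᵥ u ≤ ε * U := by
    have h := dotProduct_mulVec_le_l2OpNorm
      (Matrix.of fun (i : {x // x ∈ I}) (j : {x // x ∈ I}) => A i.1 j.1) (fun i => A i.1 j)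
    rw [Finset.sum_coe_sort I (fun i => A i j ^ 2)] at h
    refine le_trans (le_of_eq ?_) (h.trans (mul_le_mul_of_nonneg_right hε hU0))
    simp only [dotProduct, Matrix.mulVec, Matrix.of_apply, hu]
    rw [Finset.sum_coe_sort I (fun i => A i j * ∑ k : {x // x ∈ I}, A i k.1 * A k.1 j)]
    simp only [ite_mul, zero_mul, mul_ite, mul_zero, Finset.sum_ite_mem, Finset.univ_inter]
    refine Finset.sum_congr rfl fun i _ => ?_
    rw [Finset.sum_coe_sort I (fun k => A i k * A k j)]
  have huAe : u ⬝ᵥ A *ᵥ (Pi.single j 1) = U := by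
    simp [dotProduct, hu, hU, sq]
  have heAu : (Pi.single j 1) ⬝ᵥ A *ᵥ u = U := by
    rw [dotProduct_mulVec, ← mulVec_transpose, hT, dotProduct_comm, huAe]
  have heAe : (Pi.single j 1) ⬝ᵥ A *ᵥ (Pi.single j 1) = A j j := by
    simp
  -- The form of `A` at `s • u - e_j` is nonnegative for all `s`, so its discriminant in `s`
  -- is nonpositive.
  have hquad : ∀ s : ℝ, 0 ≤ (ε * U) * (s * s) + (-2 * U) * s + A j j := by
    intro s
    have h : 0 ≤ (s • u - Pi.single j 1) ⬝ᵥ A *ᵥ (s • u - Pi.single j 1) := by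
      have h := hA.dotProduct_mulVec_nonneg (s • u - Pi.single j 1)
      rwa [star_trivial] at h
    rw [mulVec_sub, mulVec_smul, sub_dotProduct, dotProduct_sub, dotProduct_sub,
      smul_dotProduct, smul_dotProduct, dotProduct_smul, dotProduct_smul, huAe, heAu, heAe] at h
    simp only [smul_eq_mul] at h
    nlinarith [mul_le_mul_of_nonneg_left huAu (mul_self_nonneg s)]
  have hd := discrim_le_zero hquad
  rw [discrim] at hd
  rcases hU0.eq_or_lt with h0 | hpos
  · rw [← h0]; positivity
  · exact le_of_mul_le_mul_left (by nlinarith) hpos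

theorem spec_eigenvector_localization
    (n : ℕ) (hn : 1 ≤ n)
    (K1 K2 : Matrix (Fin n) (Fin n) ℝ)
    (hK1 : K1.PosSemidef) (hK2 : K2.PosSemidef)
    (htr : (1 / (n : ℝ)) * K2.trace ≤ 1)
    (Λ : Matrix (Fin n) (Fin n) ℝ)
    (hΛ : Λ = (1 / (n : ℝ)) • (K1 - K2))
    (I : Finset (Fin n)) (hI : I.Nonempty) (hIc : Iᶜ.Nonempty)
    (ε1 ε2 : ℝ) (hε1 : 0 ≤ ε1) (hε2 : 0 ≤ ε2)
    (hcond1 : frobNorm (Matrix.of fun (i : {x // x ∈ I}) (j : {x // x ∈ Iᶜ}) =>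
        (1 / (n : ℝ)) * K1 i.1 j.1) ≤ ε1)
    (hcond2 : l2OpNorm (Matrix.of fun (i : {x // x ∈ I}) (j : {x // x ∈ I}) =>
        (1 / (n : ℝ)) * K2 i.1 j.1) ≤ ε2)
    (v : Fin n → (Fin n → ℝ)) (lam : Fin n → ℝ)
    (horth : ∀ i j, (∑ k, v i k * v j k) = if i = j then (1 : ℝ) else 0)
    (heig : ∀ i, Λ.mulVec (v i) = lam i • v i)
    (lamI lamIc : Fin n → ℝ)
    (hlamI : ∀ i,
      IsEigenvalue (Matrix.of fun (a : {x // x ∈ I}) (b : {x // x ∈ I}) => Λ a.1 b.1)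
        (lamI i) ∧
      ∀ μ, IsEigenvalue (Matrix.of fun (a : {x // x ∈ I}) (b : {x // x ∈ I}) => Λ a.1 b.1) μ →
        |lam i - lamI i| ≤ |lam i - μ|)
    (hlamIc : ∀ i,
      IsEigenvalue (Matrix.of fun (a : {x // x ∈ Iᶜ}) (b : {x // x ∈ Iᶜ}) => Λ a.1 b.1)
        (lamIc i) ∧
      ∀ μ, IsEigenvalue (Matrix.of fun (a : {x // x ∈ Iᶜ}) (b : {x // x ∈ Iᶜ}) => Λ a.1 b.1) μ →
        |lam i - lamIc i| ≤ |lam i - μ|) :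
    ∑ i, ((lam i - lamI i) ^ 2 * (∑ j ∈ I, (v i j) ^ 2)
        + (lam i - lamIc i) ^ 2 * (∑ j ∈ Iᶜ, (v i j) ^ 2))
      ≤ 4 * (ε1 ^ 2 + ε2) := by
  have hHerm : Λ.IsHermitian := by
    have h1 := hK1.isHermitian.eq
    have h2 := hK2.isHermitian.eq
    rw [Matrix.IsHermitian, hΛ]
    rw [conjTranspose_smul, conjTranspose_sub, h1, h2, star_trivial]
  have hA := half_bound Λ hHerm I v lam horth heig lamI (fun i => (hlamI i).2)
  have hB := half_bound Λ hHerm Iᶜ v lam horth heig lamIc (fun i => (hlamIc i).2)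
  have hsymm : ∑ a ∈ Iᶜ, ∑ k ∈ Iᶜᶜ, Λ a k ^ 2 = ∑ a ∈ I, ∑ k ∈ Iᶜ, Λ a k ^ 2 := by
    rw [compl_compl, Finset.sum_comm]
    refine Finset.sum_congr rfl fun a _ => Finset.sum_congr rfl fun k _ => ?_
    have := hHerm.apply k a
    rw [← this]; simp
  rw [hsymm] at hB
  have hn0 : (0 : ℝ) ≤ 1 / (n : ℝ) := by positivity
  have hF1 : ∑ a ∈ I, ∑ k ∈ Iᶜ, (1 / (n : ℝ) * K1 a k) ^ 2 ≤ ε1 ^ 2 := by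
    have h := (Real.sqrt_le_left hε1).mp hcond1
    refine le_trans (le_of_eq ?_) h
    rw [← Finset.sum_coe_sort I]
    refine Finset.sum_congr rfl fun a _ => ?_
    rw [← Finset.sum_coe_sort Iᶜ]
    rfl
  have hF2 : ∑ a ∈ I, ∑ k ∈ Iᶜ, (1 / (n : ℝ) * K2 a k) ^ 2 ≤ ε2 := by
    have hP : ((1 / (n : ℝ)) • K2).PosSemidef := hK2.smul hn0
    have hcol : ∀ j, ∑ i ∈ I, (1 / (n : ℝ) * K2 i j) ^ 2 ≤ ε2 * (1 / (n : ℝ) * K2 j j) :=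
      fun j => posSemidef_col_bound ((1 / (n : ℝ)) • K2) hP I ε2 hcond2 j
    rw [Finset.sum_comm]
    calc ∑ k ∈ Iᶜ, ∑ a ∈ I, (1 / (n : ℝ) * K2 a k) ^ 2
        ≤ ∑ k ∈ Iᶜ, ε2 * (1 / (n : ℝ) * K2 k k) := Finset.sum_le_sum fun k _ => hcol k
      _ ≤ ∑ k, ε2 * (1 / (n : ℝ) * K2 k k) :=
          Finset.sum_le_sum_of_subset_of_nonneg (Finset.subset_univ _) fun k _ _ =>
            mul_nonneg hε2 (mul_nonneg hn0 hK2.diag_nonneg)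
      _ = ε2 * (1 / (n : ℝ) * K2.trace) := by
          rw [← Finset.mul_sum, ← Finset.mul_sum]; rfl
      _ ≤ ε2 := mul_le_of_le_one_right hε2 htr
  have hF : ∑ a ∈ I, ∑ k ∈ Iᶜ, Λ a k ^ 2 ≤ 2 * ε1 ^ 2 + 2 * ε2 := by
    calc ∑ a ∈ I, ∑ k ∈ Iᶜ, Λ a k ^ 2
        ≤ ∑ a ∈ I, ∑ k ∈ Iᶜ,
            (2 * (1 / (n : ℝ) * K1 a k) ^ 2 + 2 * (1 / (n : ℝ) * K2 a k) ^ 2) := by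
          refine Finset.sum_le_sum fun a _ => Finset.sum_le_sum fun k _ => ?_
          have : Λ a k = 1 / (n : ℝ) * K1 a k - 1 / (n : ℝ) * K2 a k := by
            rw [hΛ, Matrix.smul_apply, Matrix.sub_apply, smul_eq_mul, mul_sub]
          rw [this]
          nlinarith [sq_nonneg (1 / (n : ℝ) * K1 a k + 1 / (n : ℝ) * K2 a k)]
      _ ≤ 2 * ε1 ^ 2 + 2 * ε2 := by
          simp only [Finset.sum_add_distrib, ← Finset.mul_sum]
          linarith
  rw [Finset.sum_add_distrib]
  linarith
end

section
/- Let n ≥ 1 and let K1, K2 be n×n real positive semidefinite matrices satisfying (1/n)·trace(K2) ≤ 1, and set Λ = (1/n)(K1 − K2). Let I be a nonempty proper subset of {1,…,n} and suppose ε1, ε2 ≥ 0 satisfy ‖(1/n)K1[I,Iᶜ]‖_F ≤ ε1 and ‖(1/n)K2[I,I]‖_2 ≤ ε2. Suppose v ∈ ℝⁿ is a unit-norm eigenvector of Λ with eigenvalue λ, and γ > 0 satisfies λ − λ_max(Λ[Iᶜ,Iᶜ]) ≥ γ, where λ_max denotes the largest eigenvalue of the symmetric matrix Λ[Iᶜ,Iᶜ].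 Then ‖v[Iᶜ]‖₂ ≤ 2·√(ε1² + ε2) / γ. -/
/-!
Write `x = v[I]`, `y = v[Iᶜ]`, `A = K1 / n`, `B = K2 / n`. Pairing the `Iᶜ`-block of
`Λ v = lam v` with `y` gives `yᵀ Λ[Iᶜ,Iᶜ] y + yᵀ Λ[Iᶜ,I] x = lam ‖y‖²`. The spectral gap bounds the
first term by `(lam - γ) ‖y‖²` (`quadForm_le_of_eigenvalue_le`), so
`γ ‖y‖² ≤ yᵀ A[Iᶜ,I] x - yᵀ B[Iᶜ,I] x`.

The `A`-term is at most `ε1 ‖x‖ ‖y‖` by Cauchy–Schwarz for the Frobenius norm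
(`bilin_sq_le_frobNorm`). For the `B`-term, positive semidefiniteness gives
`(yᵀ B x)² ≤ (yᵀ B y) (xᵀ B x)` (`PosSemidef.bilin_sq_le`), where `yᵀ B y ≤ tr B ‖y‖² ≤ ‖y‖²`
(`PosSemidef.quadForm_le_trace`) and `xᵀ B x ≤ ε2 ‖x‖²` (`quadForm_le_l2OpNorm`). Since `‖x‖ ≤ 1`,
this yields `γ ‖y‖ ≤ ε1 + √ε2 ≤ 2 √(ε1² + ε2)`.
-/

open Matrix

/-- The Rayleigh quotient of a symmetric matrix is bounded by any upper bound of its eigenvalues. -/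
lemma quadForm_le_of_eigenvalue_le {m : Type*} [Fintype m] [DecidableEq m]
    (M : Matrix m m ℝ) (hM : M.IsHermitian) (c : ℝ) (h : ∀ μ, IsEigenvalue M μ → μ ≤ c)
    (x : m → ℝ) : ∑ a, ∑ b, x a * M a b * x b ≤ c * ∑ a, x a ^ 2 := by
  have hN : (c • (1 : Matrix m m ℝ) - M).IsHermitian := by
    refine Matrix.IsHermitian.sub ?_ hM
    simp [Matrix.IsHermitian]
  have hpsd : (c • (1 : Matrix m m ℝ) - M).PosSemidef := by
    refine hN.posSemidef_iff_eigenvalues_nonneg.2 fun i => ?_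
    -- an eigenvector of `c • 1 - M` for `η` is an eigenvector of `M` for `c - η`
    have hv := hN.mulVec_eigenvectorBasis i
    have := h (c - hN.eigenvalues i) ⟨hN.eigenvectorBasis i, ?_, ?_⟩
    · simp only [Pi.zero_apply]; linarith
    · intro h0
      apply hN.eigenvectorBasis.orthonormal.ne_zero i
      ext j
      exact congrFun h0 j
    · rw [Matrix.sub_mulVec, Matrix.smul_mulVec, Matrix.one_mulVec] at hv
      rw [sub_smul, ← hv]
      abel
  have hx := hpsd.dotProduct_mulVec_nonneg x
  rw [Matrix.sub_mulVec, Matrix.smul_mulVec, Matrix.one_mulVec, dotProduct_sub] at hx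
  simp only [dotProduct, Matrix.mulVec, star_trivial, Finset.mul_sum, Pi.smul_apply,
    smul_eq_mul] at hx ⊢
  have e1 : ∑ a, ∑ b, x a * M a b * x b = ∑ a, ∑ b, x a * (M a b * x b) := by simp only [mul_assoc]
  have e2 : ∑ a, c * x a ^ 2 = ∑ a, x a * (c * x a) :=
    Finset.sum_congr rfl fun a _ => by ring
  linarith

lemma bilin_sq_le_frobNorm {l m : Type*} [Fintype l] [Fintype m]
    (M : Matrix l m ℝ) (x : l → ℝ) (y : m → ℝ) :
    (∑ i, ∑ j, x i * M i j * y j) ^ 2 ≤ frobNorm M ^ 2 * (∑ i, x i ^ 2) * ∑ j, y j ^ 2 := by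
  have h1 : (frobNorm M) ^ 2 = ∑ i, ∑ j, M i j ^ 2 :=
    Real.sq_sqrt (Finset.sum_nonneg fun _ _ => Finset.sum_nonneg fun _ _ => sq_nonneg _)
  have h2 : ∑ i, ∑ j, x i * M i j * y j = ∑ i, x i * ∑ j, M i j * y j := by
    simp only [Finset.mul_sum, mul_assoc]
  rw [h1, h2]
  calc _ ≤ (∑ i, x i ^ 2) * ∑ i, (∑ j, M i j * y j) ^ 2 := Finset.sum_mul_sq_le_sq_mul_sq _ _ _
    _ ≤ (∑ i, x i ^ 2) * ∑ i, (∑ j, M i j ^ 2) * ∑ j, y j ^ 2 := by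
      gcongr with i _
      exact Finset.sum_mul_sq_le_sq_mul_sq _ _ _
    _ = _ := by rw [← Finset.sum_mul]; ring

lemma quadForm_le_l2OpNorm {m : Type*} [Fintype m] [DecidableEq m]
    (M : Matrix m m ℝ) (x : m → ℝ) :
    ∑ i, ∑ j, x i * M i j * x j ≤ l2OpNorm M * ∑ i, x i ^ 2 := by
  set X : EuclideanSpace ℝ m := WithLp.toLp 2 x
  set T := LinearMap.toContinuousLinearMap (Matrix.toEuclideanLin M) with hT
  have h1 : inner ℝ X (T X) = ∑ i, ∑ j, x i * M i j * x j := by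
    simp [hT, X, PiLp.inner_apply, Matrix.mulVec, dotProduct, Finset.sum_mul]
    exact Finset.sum_congr rfl fun i _ => Finset.sum_congr rfl fun j _ => by ring
  have h2 : ‖X‖ ^ 2 = ∑ i, x i ^ 2 := by simp [EuclideanSpace.norm_sq_eq, X]
  rw [← h1, ← h2]
  calc _ ≤ ‖X‖ * ‖T X‖ := real_inner_le_norm _ _
    _ ≤ ‖X‖ * (‖T‖ * ‖X‖) := by gcongr; exact T.le_opNorm X
    _ = _ := by rw [l2OpNorm]; ring

/-- The factorization `B = Cᵀ C`, entrywise and for the bilinear form of `B` restricted to index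
sets `S` and `T`. -/
lemma PosSemidef.exists_gram {m : Type*} [Fintype m] [DecidableEq m]
    {B : Matrix m m ℝ} (hB : B.PosSemidef) :
    ∃ C : Matrix m m ℝ, (∀ i j, B i j = ∑ k, C k i * C k j) ∧
      ∀ (S T : Finset m) (v : m → ℝ), ∑ i ∈ S, ∑ j ∈ T, v i * B i j * v j =
        ∑ k, (∑ i ∈ S, C k i * v i) * ∑ j ∈ T, C k j * v j := by
  open scoped MatrixOrder Matrix.Norms.L2Operator in
  obtain ⟨C, hC⟩ := CStarAlgebra.nonneg_iff_eq_star_mul_self.mp hB.nonneg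
  have hC' : ∀ i j, B i j = ∑ k, C k i * C k j := fun i j => by
    simp [hC, Matrix.mul_apply, Matrix.star_apply]
  refine ⟨C, hC', fun S T v => ?_⟩
  simp only [Finset.sum_mul_sum]
  simp only [hC', Finset.mul_sum, Finset.sum_mul]
  rw [Finset.sum_comm (s := Finset.univ)]
  refine Finset.sum_congr rfl fun i _ => ?_
  rw [Finset.sum_comm (s := Finset.univ)]
  exact Finset.sum_congr rfl fun j _ => Finset.sum_congr rfl fun k _ => by ring

lemma PosSemidef.bilin_sq_le {m : Type*} [Fintype m] [DecidableEq m]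
    {B : Matrix m m ℝ} (hB : B.PosSemidef) (S T : Finset m) (v : m → ℝ) :
    (∑ i ∈ S, ∑ j ∈ T, v i * B i j * v j) ^ 2 ≤
      (∑ i ∈ S, ∑ j ∈ S, v i * B i j * v j) * ∑ i ∈ T, ∑ j ∈ T, v i * B i j * v j := by
  obtain ⟨C, -, h⟩ := PosSemidef.exists_gram hB
  simp only [h, ← sq]
  exact Finset.sum_mul_sq_le_sq_mul_sq _ _ _

lemma PosSemidef.quadForm_le_trace {m : Type*} [Fintype m] [DecidableEq m]
    {B : Matrix m m ℝ} (hB : B.PosSemidef) (S : Finset m) (v : m → ℝ) :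
    ∑ i ∈ S, ∑ j ∈ S, v i * B i j * v j ≤ B.trace * ∑ i ∈ S, v i ^ 2 := by
  obtain ⟨C, hC, h⟩ := PosSemidef.exists_gram hB
  have htr : B.trace = ∑ k, ∑ i, C k i ^ 2 := by
    rw [Finset.sum_comm]
    simp [Matrix.trace, hC, sq]
  rw [h, htr, Finset.sum_mul]
  refine Finset.sum_le_sum fun k _ => ?_
  rw [← sq]
  refine (Finset.sum_mul_sq_le_sq_mul_sq _ _ _).trans ?_
  gcongr
  exact Finset.subset_univ S

theorem spec_eigenvector_complement_bound
    (n : ℕ) (hn : 1 ≤ n)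
    (K1 K2 : Matrix (Fin n) (Fin n) ℝ)
    (hK1 : K1.PosSemidef) (hK2 : K2.PosSemidef)
    (htr : (1 / (n : ℝ)) * K2.trace ≤ 1)
    (Λ : Matrix (Fin n) (Fin n) ℝ)
    (hΛ : Λ = (1 / (n : ℝ)) • (K1 - K2))
    (I : Finset (Fin n)) (hI : I.Nonempty) (hIc : Iᶜ.Nonempty)
    (ε1 ε2 : ℝ) (hε1 : 0 ≤ ε1) (hε2 : 0 ≤ ε2)
    (hcond1 : frobNorm (Matrix.of fun (i : {x // x ∈ I}) (j : {x // x ∈ Iᶜ}) =>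
        (1 / (n : ℝ)) * K1 i.1 j.1) ≤ ε1)
    (hcond2 : l2OpNorm (Matrix.of fun (i : {x // x ∈ I}) (j : {x // x ∈ I}) =>
        (1 / (n : ℝ)) * K2 i.1 j.1) ≤ ε2)
    (v : Fin n → ℝ) (lam : ℝ)
    (hunit : ∑ k, (v k) ^ 2 = 1)
    (heig : Λ.mulVec v = lam • v)
    (γ : ℝ) (hγ : 0 < γ)
    -- `lam - λ_max(Λ[Iᶜ, Iᶜ]) ≥ γ`, i.e. the gap with every eigenvalue of the
    -- principal submatrix `Λ[Iᶜ, Iᶜ]` is at least `γ`: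
    (hgap : ∀ μ : ℝ,
      IsEigenvalue (Matrix.of fun (a : {x // x ∈ Iᶜ}) (b : {x // x ∈ Iᶜ}) => Λ a.1 b.1) μ →
      γ ≤ lam - μ) :
    Real.sqrt (∑ j ∈ Iᶜ, (v j) ^ 2) ≤ 2 * Real.sqrt (ε1 ^ 2 + ε2) / γ := by
  have hn0 : (0 : ℝ) < n := by exact_mod_cast hn
  set A : Matrix (Fin n) (Fin n) ℝ := (1 / (n : ℝ)) • K1 with hA
  set B : Matrix (Fin n) (Fin n) ℝ := (1 / (n : ℝ)) • K2 with hB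
  have hBpsd : B.PosSemidef := hK2.smul (by positivity)
  have hΛAB : ∀ i j, Λ i j = A i j - B i j := fun i j => by simp [hΛ, hA, hB, mul_sub]
  have hΛs : Λ.IsHermitian := by
    rw [hΛ]
    have := hK1.1.sub hK2.1
    rw [Matrix.IsHermitian, Matrix.conjTranspose_smul, this.eq, star_trivial]
  have hAs : ∀ i j, A i j = A j i := fun i j => by
    have := hK1.1.apply i j
    simp only [star_trivial] at this
    simp [hA, this]
  have htrB : B.trace ≤ 1 := by simpa [hB, Matrix.trace_smul] using htr
  set X := ∑ i ∈ I, v i ^ 2 with hX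
  set Y := ∑ j ∈ Iᶜ, v j ^ 2 with hY
  have hX0 : 0 ≤ X := Finset.sum_nonneg fun _ _ => sq_nonneg _
  have hY0 : 0 ≤ Y := Finset.sum_nonneg fun _ _ => sq_nonneg _
  have hXY : X + Y = 1 := by rw [← hunit]; exact Finset.sum_add_sum_compl I _
  -- sums over the subtypes indexing the blocks become sums over `I` and `Iᶜ`
  have hsub : ∀ (S T : Finset (Fin n)) (M : Matrix (Fin n) (Fin n) ℝ),
      ∑ a : {x // x ∈ S}, ∑ b : {x // x ∈ T}, v a.1 * M a.1 b.1 * v b.1 =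
        ∑ a ∈ S, ∑ b ∈ T, v a * M a b * v b := fun S T M => by
    rw [← Finset.sum_coe_sort S]
    refine Finset.sum_congr rfl fun a _ => ?_
    exact Finset.sum_coe_sort T fun b => v a.1 * M a.1 b * v b
  have hsq : ∀ S : Finset (Fin n), ∑ a : {x // x ∈ S}, v a.1 ^ 2 = ∑ a ∈ S, v a ^ 2 :=
    fun S => Finset.sum_coe_sort S fun a => v a ^ 2
  have hcc : ∑ a ∈ Iᶜ, ∑ b ∈ Iᶜ, v a * Λ a b * v b ≤ (lam - γ) * Y := by
    have := quadForm_le_of_eigenvalue_le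
      (Matrix.of fun (a : {x // x ∈ Iᶜ}) (b : {x // x ∈ Iᶜ}) => Λ a.1 b.1)
      (by ext a b; exact hΛs.apply a.1 b.1) (lam - γ)
      (fun μ hμ => by linarith [hgap μ hμ]) (fun a => v a.1)
    simp only [Matrix.of_apply] at this
    rwa [hsub, hsq] at this
  set P := ∑ i ∈ I, ∑ j ∈ Iᶜ, v i * A i j * v j with hP
  set Q := ∑ j ∈ Iᶜ, ∑ i ∈ I, v j * B j i * v i with hQ
  have hP2 : P ^ 2 ≤ ε1 ^ 2 * Y := by
    have := bilin_sq_le_frobNorm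
      (Matrix.of fun (i : {x // x ∈ I}) (j : {x // x ∈ Iᶜ}) => A i.1 j.1)
      (fun i => v i.1) (fun j => v j.1)
    simp only [Matrix.of_apply] at this
    rw [hsub, hsq, hsq] at this
    have hf : frobNorm (Matrix.of fun (i : {x // x ∈ I}) (j : {x // x ∈ Iᶜ}) => A i.1 j.1) ≤ ε1 :=
      hcond1
    calc P ^ 2 ≤ _ := this
      _ ≤ ε1 ^ 2 * 1 * Y := by
        gcongr
        · exact Real.sqrt_nonneg _
        · linarith
      _ = _ := by ring
  have hQ2 : Q ^ 2 ≤ ε2 * Y := by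
    have hx := quadForm_le_l2OpNorm
      (Matrix.of fun (i : {x // x ∈ I}) (j : {x // x ∈ I}) => B i.1 j.1) (fun i => v i.1)
    simp only [Matrix.of_apply] at hx
    rw [hsub, hsq] at hx
    have hl : l2OpNorm (Matrix.of fun (i : {x // x ∈ I}) (j : {x // x ∈ I}) => B i.1 j.1) ≤ ε2 :=
      hcond2
    have hx' : ∑ i ∈ I, ∑ j ∈ I, v i * B i j * v j ≤ ε2 := by
      refine hx.trans ?_
      calc _ ≤ ε2 * X := by gcongr
        _ ≤ ε2 := by nlinarith
    have hy : ∑ i ∈ Iᶜ, ∑ j ∈ Iᶜ, v i * B i j * v j ≤ Y := by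
      refine (PosSemidef.quadForm_le_trace hBpsd Iᶜ v).trans ?_
      nlinarith
    have hx0 : 0 ≤ ∑ i ∈ I, ∑ j ∈ I, v i * B i j * v j := by
      obtain ⟨C, -, h⟩ := PosSemidef.exists_gram hBpsd
      rw [h]
      exact Finset.sum_nonneg fun _ _ => mul_self_nonneg _
    refine (PosSemidef.bilin_sq_le hBpsd Iᶜ I v).trans ?_
    rw [mul_comm ε2]
    gcongr
  have hmain : γ * Y ≤ P - Q := by
    have h1 : ∑ a ∈ Iᶜ, v a * Λ.mulVec v a = lam * Y := by
      rw [heig, hY, Finset.mul_sum]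
      exact Finset.sum_congr rfl fun a _ => by simp only [Pi.smul_apply, smul_eq_mul]; ring
    have h2 : ∑ a ∈ Iᶜ, v a * Λ.mulVec v a =
        (∑ a ∈ Iᶜ, ∑ b ∈ I, v a * Λ a b * v b) + ∑ a ∈ Iᶜ, ∑ b ∈ Iᶜ, v a * Λ a b * v b := by
      rw [← Finset.sum_add_distrib]
      refine Finset.sum_congr rfl fun a _ => ?_
      rw [Finset.sum_add_sum_compl]
      simp only [Matrix.mulVec, dotProduct, Finset.mul_sum, mul_assoc]
    have h3 : ∑ a ∈ Iᶜ, ∑ b ∈ I, v a * Λ a b * v b = P - Q := by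
      rw [hP, hQ, Finset.sum_comm (s := I) (t := Iᶜ), ← Finset.sum_sub_distrib]
      refine Finset.sum_congr rfl fun i _ => ?_
      rw [← Finset.sum_sub_distrib]
      refine Finset.sum_congr rfl fun j _ => ?_
      rw [hΛAB, hAs j i]; ring
    linarith
  have hsqm : (γ * Y) ^ 2 ≤ 2 * (ε1 ^ 2 + ε2) * Y := by
    have h0 : 0 ≤ γ * Y := by positivity
    have : (γ * Y) ^ 2 ≤ (P - Q) ^ 2 := by gcongr
    nlinarith [sq_nonneg (P + Q)]
  have hfin : γ ^ 2 * Y ≤ 4 * (ε1 ^ 2 + ε2) := by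
    rcases hY0.eq_or_lt with h | h
    · rw [← h]; nlinarith [sq_nonneg ε1]
    · have : γ ^ 2 * Y ≤ 2 * (ε1 ^ 2 + ε2) := by
        refine le_of_mul_le_mul_right ?_ h
        linarith [hsqm]
      nlinarith [sq_nonneg ε1]
  rw [le_div_iff₀ hγ]
  refine abs_le_of_sq_le_sq' ?_ (by positivity) |>.2
  rw [mul_pow, mul_pow, Real.sq_sqrt hY0, Real.sq_sqrt (by positivity)]
  linarith
end

section
/- Let z_1,…,z_n ∈ ℝ^{p1} and w_1,…,w_n ∈ ℝ^{p2} be fixed points, and let μ1 and μ2 be Borel probability measures on ℝ^{p1} and ℝ^{p2} respectively. Define the exact kernel matrices K1[i,j] = ∫ cos(⟨ω, z_i − z_j⟩) dμ1(ω) and K2[i,j] = ∫ cos(⟨ω, w_i − w_j⟩) dμ2(ω), and Λ = (1/n)(K1 − K2). Let ω¹_1,…,ω¹_m be i.i.d. samples from μ1 and ω²_1,…,ω²_m be i.i.d. samples from μ2, all mutually independent, and define the proxy kernel matrices K̂1[i,j] = (1/m)Σ_{t=1}^{m} cos(⟨ω¹_t, z_i − z_j⟩) and K̂2[i,j] = (1/m)Σ_{t=1}^{m}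 cos(⟨ω²_t, w_i − w_j⟩), and Λ̂ = (1/n)(K̂1 − K̂2). Let v̂_1,…,v̂_n be an orthonormal eigenbasis of the symmetric matrix Λ̂ with eigenvalues λ̂_1,…,λ̂_n (measurably chosen). Then for every δ ∈ (0,1), with probability at least 1 − δ over the draw of the samples, Σ_{i=1}^{n} ‖Λ·v̂_i − λ̂_i·v̂_i‖₂² ≤ 128·log(2/δ)/m. -/
/-! The squared residuals sum to `‖Λ - Λ̂‖_F²`, because a Frobenius norm can be computed in any
orthonormal basis (`residual_sum_eq`). The matrix `Λ̂ - Λ` is an average of independent centred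
bounded random vectors in the Hilbert space of `n × n` matrices, so a dimension-free
concentration inequality suffices. It is obtained from the moment `E cosh ‖x + Y‖`:
since `u ↦ cosh √u` is increasing and convex, for `‖y‖ ≤ B` the number `cosh ‖x + y‖` is at most
`cosh ‖x‖ cosh B` plus a multiple (independent of `y`) of `⟪x, y⟫` (`cosh_norm_add_le`).
For centred `Y` the last term integrates to zero, and each independent summand thus costs a
factor `cosh B ≤ exp (B² / 2)` (`lintegral_pi_cosh_le`). Markov's inequality with scale
`√(log (2/δ) / (2m))` concludes. -/

open Matrix MeasureTheory

/-- `u ↦ cosh √u = ∑ uᵏ / (2k)!` lies below its chords on `[0, ∞)`. -/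
lemma cosh_le_chord {r p q θ : ℝ} (hθ0 : 0 ≤ θ) (hθ1 : θ ≤ 1)
    (h : r ^ 2 ≤ θ * p ^ 2 + (1 - θ) * q ^ 2) :
    Real.cosh r ≤ θ * Real.cosh p + (1 - θ) * Real.cosh q := by
  refine hasSum_le (fun k => ?_) (Real.hasSum_cosh r)
    (((Real.hasSum_cosh p).mul_left θ).add ((Real.hasSum_cosh q).mul_left (1 - θ)))
  have h1 : (r ^ 2) ^ k ≤ θ * (p ^ 2) ^ k + (1 - θ) * (q ^ 2) ^ k := by
    have h2 := (convexOn_pow (𝕜 := ℝ) k).2 (Set.mem_Ici.2 (sq_nonneg p))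
      (Set.mem_Ici.2 (sq_nonneg q)) hθ0 (sub_nonneg.2 hθ1) (by ring)
    simp only [smul_eq_mul] at h2
    exact (pow_le_pow_left₀ (sq_nonneg r) h k).trans h2
  rw [pow_mul, pow_mul, pow_mul, ← mul_div_assoc, ← mul_div_assoc, ← add_div]
  gcongr

section Hilbert

variable {E : Type*} [NormedAddCommGroup E] [InnerProductSpace ℝ E]

/-- The coefficient `κ` does not depend on `y`, so the inner product term vanishes on average
for centred `y`. -/
lemma cosh_norm_add_le (x : E) {B : ℝ} (hB : 0 ≤ B) :
    ∃ κ : ℝ, ∀ y : E, ‖y‖ ≤ B →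
      Real.cosh ‖x + y‖ ≤ Real.cosh ‖x‖ * Real.cosh B + κ * inner ℝ x y := by
  set a := ‖x‖ with ha
  have ha0 : 0 ≤ a := norm_nonneg x
  rcases (mul_nonneg ha0 hB).eq_or_lt with h0 | hpos
  · refine ⟨0, fun y hy => ?_⟩
    have h1 : ‖x + y‖ ≤ a + B := (norm_add_le x y).trans (by gcongr)
    have h2 : Real.cosh ‖x + y‖ ≤ Real.cosh (a + B) := by
      rw [Real.cosh_le_cosh, abs_of_nonneg (norm_nonneg _), abs_of_nonneg (by positivity)]
      exact h1
    rcases mul_eq_zero.1 h0.symm with h | h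
    · rw [h] at h2 ⊢; simpa using h2
    · rw [h] at h2 ⊢; simpa using h2
  · refine ⟨Real.sinh a * Real.sinh B / (a * B), fun y hy => ?_⟩
    set s : ℝ := inner ℝ x y with hs
    have hsabs : |s| ≤ a * B := (abs_real_inner_le_norm x y).trans (by gcongr)
    have hs1 := abs_le.1 hsabs
    -- `‖x + y‖² ≤ a² + B² + 2s` is the convex combination of `(a + B)²` and `(a - B)²`
    -- with weight `(1 + s / (aB)) / 2`.
    set u := s / (a * B) with hu
    have hus : s = u * (a * B) := (div_mul_cancel₀ s hpos.ne').symm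
    have hu1 : u ≤ 1 := by rw [hu, div_le_one hpos]; exact hs1.2
    have hu0 : -1 ≤ u := by rw [hu, le_div_iff₀ hpos]; linarith [hs1.1]
    have hn : ‖x + y‖ ^ 2 ≤ (1 + u) / 2 * (a + B) ^ 2 + (1 - (1 + u) / 2) * (a - B) ^ 2 := by
      rw [norm_add_sq_real, ← hs, ← ha]
      have : ‖y‖ ^ 2 ≤ B ^ 2 := by gcongr
      nlinarith
    have := cosh_le_chord (by linarith) (by linarith) hn
    rw [Real.cosh_add, Real.cosh_sub] at this
    refine this.trans (le_of_eq ?_)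
    have h3 : Real.sinh a * Real.sinh B / (a * B) * s = Real.sinh a * Real.sinh B * u := by
      rw [hu]; ring
    rw [h3]
    ring

variable [MeasurableSpace E] [BorelSpace E] [SecondCountableTopology E]

lemma lintegral_cosh_le {Ω : Type*} [MeasurableSpace Ω] (μ : Measure Ω) [IsProbabilityMeasure μ]
    (Y : Ω → E) (hY : Measurable Y) {B : ℝ} (hB : 0 ≤ B) (hYB : ∀ ω, ‖Y ω‖ ≤ B)
    (hY0 : ∀ x : E, ∫ ω, inner ℝ x (Y ω) ∂μ = 0) (x : E) :
    ∫⁻ ω, ENNReal.ofReal (Real.cosh ‖x + Y ω‖) ∂μ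
      ≤ ENNReal.ofReal (Real.cosh ‖x‖ * Real.cosh B) := by
  obtain ⟨κ, hκ⟩ := cosh_norm_add_le x hB
  have hint : Integrable (fun ω => (inner ℝ x (Y ω) : ℝ)) μ := by
    refine Integrable.of_bound (C := ‖x‖ * B) (by fun_prop) (.of_forall fun ω => ?_)
    exact (norm_inner_le_norm x (Y ω)).trans (by gcongr; exact hYB ω)
  have hint2 : Integrable
      (fun ω => Real.cosh ‖x‖ * Real.cosh B + κ * inner ℝ x (Y ω)) μ :=
    (integrable_const _).add (hint.const_mul κ)
  calc _ ≤ ∫⁻ ω, ENNReal.ofReal (Real.cosh ‖x‖ * Real.cosh B + κ * inner ℝ x (Y ω)) ∂μ :=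
        lintegral_mono fun ω => ENNReal.ofReal_le_ofReal (hκ _ (hYB ω))
    _ = ENNReal.ofReal (∫ ω, Real.cosh ‖x‖ * Real.cosh B + κ * inner ℝ x (Y ω) ∂μ) := by
        rw [ofReal_integral_eq_lintegral_ofReal hint2]
        exact .of_forall fun ω => (Real.cosh_pos _).le.trans (hκ _ (hYB ω))
    _ = _ := by
        rw [integral_add (integrable_const _) (hint.const_mul κ), integral_const_mul κ, hY0]
        simp

lemma lintegral_pi_cosh_le {Ω : Type*} [MeasurableSpace Ω] (μ : Measure Ω)
    [IsProbabilityMeasure μ]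
    (Y : Ω → E) (hY : Measurable Y) {B : ℝ} (hB : 0 ≤ B) (hYB : ∀ ω, ‖Y ω‖ ≤ B)
    (hY0 : ∀ x : E, ∫ ω, inner ℝ x (Y ω) ∂μ = 0) (m : ℕ) (x : E) :
    ∫⁻ ω, ENNReal.ofReal (Real.cosh ‖x + ∑ t, Y (ω t)‖) ∂(Measure.pi fun _ : Fin m => μ)
      ≤ ENNReal.ofReal (Real.cosh ‖x‖ * Real.cosh B ^ m) := by
  induction m generalizing x with
  | zero => simp
  | succ m ih =>
    have hmp := (measurePreserving_piFinSuccAbove (fun _ : Fin (m + 1) => μ) 0).symm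
    rw [← hmp.lintegral_comp (by fun_prop), lintegral_prod _ (by fun_prop)]
    have hc : 0 ≤ Real.cosh B ^ m := by positivity
    calc _ ≤ ∫⁻ a, ENNReal.ofReal (Real.cosh ‖x + Y a‖) * ENNReal.ofReal (Real.cosh B ^ m) ∂μ := by
          refine lintegral_mono fun a => ?_
          rw [← ENNReal.ofReal_mul (by positivity)]
          refine le_trans (le_of_eq ?_) (ih (x + Y a))
          refine lintegral_congr fun ω => ?_
          simp [MeasurableEquiv.piFinSuccAbove, Fin.sum_univ_succ, add_assoc]
      _ ≤ _ := by
          rw [lintegral_mul_const _ (by fun_prop), pow_succ', ← mul_assoc,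
            ENNReal.ofReal_mul (by positivity)]
          gcongr
          exact lintegral_cosh_le μ Y hY hB hYB hY0 x

/-- The difference of two independent sums of `m` centred terms; each sum contributes a factor
`cosh B ^ m`. -/
lemma lintegral_prod_cosh_le {Ω₁ Ω₂ : Type*} [MeasurableSpace Ω₁] [MeasurableSpace Ω₂]
    (μ : Measure Ω₁) (ν : Measure Ω₂) [IsProbabilityMeasure μ] [IsProbabilityMeasure ν]
    (Y : Ω₁ → E) (Z : Ω₂ → E) (hY : Measurable Y) (hZ : Measurable Z) {B : ℝ} (hB : 0 ≤ B)
    (hYB : ∀ ω, ‖Y ω‖ ≤ B) (hZB : ∀ ω, ‖Z ω‖ ≤ B)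
    (hY0 : ∀ x : E, ∫ ω, inner ℝ x (Y ω) ∂μ = 0)
    (hZ0 : ∀ x : E, ∫ ω, inner ℝ x (Z ω) ∂ν = 0) (m : ℕ) :
    ∫⁻ ω, ENNReal.ofReal (Real.cosh ‖∑ t, Y (ω.1 t) + ∑ t, -Z (ω.2 t)‖)
        ∂((Measure.pi fun _ : Fin m => μ).prod (Measure.pi fun _ : Fin m => ν))
      ≤ ENNReal.ofReal (Real.cosh B ^ m * Real.cosh B ^ m) := by
  have hZ' := lintegral_pi_cosh_le ν (fun ω => -Z ω) (by fun_prop) hB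
    (fun ω => by rw [norm_neg]; exact hZB ω)
    (fun x => by simp only [inner_neg_right]; rw [integral_neg, hZ0, neg_zero]) m
  rw [lintegral_prod _ (by fun_prop)]
  have hc : 0 ≤ Real.cosh B ^ m := by positivity
  calc _ ≤ ∫⁻ a, ENNReal.ofReal (Real.cosh ‖∑ t, Y (a t)‖)
          * ENNReal.ofReal (Real.cosh B ^ m) ∂(Measure.pi fun _ : Fin m => μ) := by
        refine lintegral_mono fun a => ?_
        rw [← ENNReal.ofReal_mul (by positivity)]
        have := hZ' (∑ t, Y (a t))
        exact this
    _ ≤ _ := by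
        rw [lintegral_mul_const _ (by fun_prop), ENNReal.ofReal_mul hc]
        gcongr
        simpa using lintegral_pi_cosh_le μ Y hY hB hYB hY0 m 0

end Hilbert

lemma residual_sum_eq {n : ℕ} (A C : Matrix (Fin n) (Fin n) ℝ) (v : Fin n → Fin n → ℝ)
    (l : Fin n → ℝ)
    (horth : ∀ i j, (∑ k, v i k * v j k) = if i = j then (1 : ℝ) else 0)
    (heig : ∀ i, C.mulVec (v i) = l i • v i) :
    ∑ i, ∑ k, (A.mulVec (v i) k - l i * v i k) ^ 2 = ∑ k, ∑ j, (C k j - A k j) ^ 2 := by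
  have hV : (Matrix.of v) * (Matrix.of v)ᵀ = 1 := by
    ext i j
    simpa [Matrix.mul_apply, Matrix.one_apply] using horth i j
  have hV' : (Matrix.of v)ᵀ * (Matrix.of v) = 1 := mul_eq_one_comm.1 hV
  set D := (A - C) * (Matrix.of v)ᵀ with hD
  have hDD : D * Dᵀ = (A - C) * (A - C)ᵀ := by
    rw [hD, Matrix.transpose_mul, Matrix.transpose_transpose, Matrix.mul_assoc,
      ← Matrix.mul_assoc (Matrix.of v)ᵀ, hV', Matrix.one_mul]
  rw [Finset.sum_comm]
  refine Finset.sum_congr rfl fun k _ => ?_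
  have h1 := congrFun (congrFun hDD k) k
  simp only [Matrix.mul_apply, Matrix.transpose_apply, Matrix.sub_apply] at h1
  calc _ = ∑ i, D k i * D k i := by
        refine Finset.sum_congr rfl fun i _ => ?_
        have h2 : l i * v i k = C.mulVec (v i) k := by rw [heig]; simp
        have h3 : D k i = A.mulVec (v i) k - C.mulVec (v i) k := by
          rw [← Pi.sub_apply, ← Matrix.sub_mulVec]
          simp [hD, Matrix.mul_apply, Matrix.mulVec, dotProduct]
        rw [h2, h3, sq]
    _ = _ := by
        rw [h1]
        exact Finset.sum_congr rfl fun j _ => by ring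

/-- The centred random feature matrix `c (cos ⟨ω, z_i - z_j⟩ - K_ij)`, as a vector of the
Hilbert space of `n × n` matrices with the Frobenius norm. -/
noncomputable def feat {n p : ℕ} (z : Fin n → Fin p → ℝ) (K : Matrix (Fin n) (Fin n) ℝ) (c : ℝ)
    (ω : Fin p → ℝ) : EuclideanSpace ℝ (Fin n × Fin n) :=
  WithLp.toLp 2 fun q => c * (Real.cos (∑ t, ω t * (z q.1 t - z q.2 t)) - K q.1 q.2)

section Feat

variable {n p : ℕ} (z : Fin n → Fin p → ℝ) (K : Matrix (Fin n) (Fin n) ℝ) (c : ℝ)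

lemma measurable_feat : Measurable (feat z K c) := by
  unfold feat
  fun_prop

variable (μ : Measure (Fin p → ℝ)) [IsProbabilityMeasure μ]

lemma integrable_cos (i j : Fin n) :
    Integrable (fun ω : Fin p → ℝ => Real.cos (∑ t, ω t * (z i t - z j t))) μ :=
  Integrable.of_bound (C := 1)
    (by fun_prop : Measurable _).aestronglyMeasurable (.of_forall fun ω => Real.abs_cos_le_one _)

lemma norm_feat_le
    (hK : ∀ i j, K i j = ∫ ω, Real.cos (∑ t, ω t * (z i t - z j t)) ∂μ)
    (hn : 0 < n) (lam : ℝ) (hlam : 0 ≤ lam) (ω : Fin p → ℝ) :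
    ‖feat z K (lam / n) ω‖ ≤ 2 * lam := by
  have hn' : (0 : ℝ) < n := by exact_mod_cast hn
  have hKb : ∀ i j, |K i j| ≤ 1 := fun i j => by
    rw [hK]
    simpa using norm_integral_le_of_norm_le_const (μ := μ)
      (f := fun ω : Fin p → ℝ => Real.cos (∑ t, ω t * (z i t - z j t))) (C := 1)
      (.of_forall fun ω => Real.abs_cos_le_one _)
  refine le_of_sq_le_sq ?_ (by positivity)
  rw [EuclideanSpace.norm_sq_eq]
  calc _ ≤ ∑ _q : Fin n × Fin n, (lam / n * 2) ^ 2 := by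
        refine Finset.sum_le_sum fun q _ => ?_
        simp only [feat, norm_mul, Real.norm_eq_abs]
        rw [abs_of_nonneg (by positivity : 0 ≤ lam / n)]
        gcongr
        have h1 := hKb q.1 q.2
        have h2 := Real.abs_cos_le_one (∑ t, ω t * (z q.1 t - z q.2 t))
        exact (abs_sub _ _).trans (by linarith)
    _ = (2 * lam) ^ 2 := by
        simp
        field_simp

lemma integral_inner_feat
    (hK : ∀ i j, K i j = ∫ ω, Real.cos (∑ t, ω t * (z i t - z j t)) ∂μ)
    (x : EuclideanSpace ℝ (Fin n × Fin n)) :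
    ∫ ω, inner ℝ x (feat z K c ω) ∂μ = 0 := by
  simp only [PiLp.inner_apply, feat]
  have h : ∀ q : Fin n × Fin n, Integrable (fun ω : Fin p → ℝ =>
      c * (Real.cos (∑ t, ω t * (z q.1 t - z q.2 t)) - K q.1 q.2)) μ := fun q =>
    ((integrable_cos z μ q.1 q.2).sub (integrable_const _)).const_mul c
  simp only [RCLike.inner_apply, conj_trivial]
  rw [integral_finsetSum _ fun q _ => (h q).mul_const _]
  refine Finset.sum_eq_zero fun q _ => ?_
  rw [integral_mul_const, integral_const_mul,
    integral_sub (integrable_cos z μ q.1 q.2) (integrable_const _), ← hK]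
  simp

end Feat

theorem rff_proxy_eigenvector_residual_bound
    (n p1 p2 m : ℕ) (hn : 0 < n) (hm : 0 < m)
    (z : Fin n → (Fin p1 → ℝ)) (w : Fin n → (Fin p2 → ℝ))
    (μ1 : Measure (Fin p1 → ℝ)) (μ2 : Measure (Fin p2 → ℝ))
    [IsProbabilityMeasure μ1] [IsProbabilityMeasure μ2]
    (K1 K2 : Matrix (Fin n) (Fin n) ℝ)
    (hK1 : ∀ i j, K1 i j = ∫ ω, Real.cos (∑ t, ω t * (z i t - z j t)) ∂μ1)
    (hK2 : ∀ i j, K2 i j = ∫ ω, Real.cos (∑ t, ω t * (w i t - w j t)) ∂μ2)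
    (Λ : Matrix (Fin n) (Fin n) ℝ)
    (hΛ : Λ = (1 / (n : ℝ)) • (K1 - K2))
    (K1h : (Fin m → (Fin p1 → ℝ)) → Matrix (Fin n) (Fin n) ℝ)
    (K2h : (Fin m → (Fin p2 → ℝ)) → Matrix (Fin n) (Fin n) ℝ)
    (hK1h : ∀ ω i j, K1h ω i j = (1 / (m : ℝ)) * ∑ t, Real.cos (∑ s, ω t s * (z i s - z j s)))
    (hK2h : ∀ ω i j, K2h ω i j = (1 / (m : ℝ)) * ∑ t, Real.cos (∑ s, ω t s * (w i s - w j s)))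
    (Λh : (Fin m → (Fin p1 → ℝ)) × (Fin m → (Fin p2 → ℝ)) → Matrix (Fin n) (Fin n) ℝ)
    (hΛh : ∀ ω, Λh ω = (1 / (n : ℝ)) • (K1h ω.1 - K2h ω.2))
    (vh : (Fin m → (Fin p1 → ℝ)) × (Fin m → (Fin p2 → ℝ)) → Fin n → (Fin n → ℝ))
    (lamh : (Fin m → (Fin p1 → ℝ)) × (Fin m → (Fin p2 → ℝ)) → Fin n → ℝ)
    (hmeas_v : Measurable vh) (hmeas_lam : Measurable lamh)
    (horth : ∀ ω i j, (∑ k, vh ω i k * vh ω j k) = if i = j then (1 : ℝ) else 0)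
    (heig : ∀ ω i, (Λh ω).mulVec (vh ω i) = lamh ω i • vh ω i)
    (δ : ℝ) (hδ0 : 0 < δ) (hδ1 : δ < 1) :
    ENNReal.ofReal (1 - δ) ≤
      ((Measure.pi fun _ : Fin m => μ1).prod (Measure.pi fun _ : Fin m => μ2))
        {ω | ∑ i, ∑ k, (Λ.mulVec (vh ω i) k - lamh ω i * vh ω i k) ^ 2
              ≤ 128 * Real.log (2 / δ) / m} := by
  have hn' : (0 : ℝ) < n := by exact_mod_cast hn
  have hm' : (0 : ℝ) < m := by exact_mod_cast hm
  set L := Real.log (2 / δ) with hL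
  have hL0 : 0 < L := Real.log_pos (by rw [lt_div_iff₀ hδ0]; linarith)
  have hexpL : Real.exp L = 2 / δ := Real.exp_log (by positivity)
  -- With this scale the moment `E cosh ‖S‖` is at most `exp (2L)`, while on the bad event
  -- `‖S‖² > 64 L²`; the weaker bound `‖S‖ ≥ 3L` already gives probability `2 exp (-L) = δ`.
  set lam := Real.sqrt (L / (2 * m)) with hlam
  have hlam0 : 0 ≤ lam := Real.sqrt_nonneg _
  have hlam2 : lam ^ 2 = L / (2 * m) := Real.sq_sqrt (by positivity)
  set Y1 := feat z K1 (lam / n) with hY1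
  set Y2 := feat w K2 (lam / n) with hY2
  set P1 := Measure.pi fun _ : Fin m => μ1
  set P2 := Measure.pi fun _ : Fin m => μ2
  set S : (Fin m → (Fin p1 → ℝ)) × (Fin m → (Fin p2 → ℝ)) → EuclideanSpace ℝ (Fin n × Fin n) :=
    fun ω => ∑ t, Y1 (ω.1 t) + ∑ t, -Y2 (ω.2 t) with hS
  have hmY1 : Measurable Y1 := measurable_feat z K1 _
  have hmY2 : Measurable Y2 := measurable_feat w K2 _
  have hmS : Measurable S := by fun_prop
  have hmoment : ∫⁻ ω, ENNReal.ofReal (Real.cosh ‖S ω‖) ∂(P1.prod P2)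
      ≤ ENNReal.ofReal (Real.exp (2 * L)) := by
    refine (lintegral_prod_cosh_le μ1 μ2 Y1 Y2 hmY1 hmY2 (by positivity : 0 ≤ 2 * lam)
      (norm_feat_le z K1 μ1 hK1 hn lam hlam0) (norm_feat_le w K2 μ2 hK2 hn lam hlam0)
      (integral_inner_feat z K1 _ μ1 hK1) (integral_inner_feat w K2 _ μ2 hK2) m).trans ?_
    refine ENNReal.ofReal_le_ofReal ?_
    have h1 : Real.cosh (2 * lam) ^ m ≤ Real.exp L := by
      calc _ ≤ Real.exp ((2 * lam) ^ 2 / 2) ^ m := by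
            gcongr
            exact Real.cosh_le_exp_half_sq _
        _ = Real.exp L := by
            rw [← Real.exp_nat_mul, mul_pow, hlam2]
            congr 1
            field_simp
    rw [two_mul L, Real.exp_add]
    gcongr
  have hnormS : ∀ ω, ‖S ω‖ ^ 2 = lam ^ 2 * m ^ 2 * ∑ k, ∑ j, (Λh ω k j - Λ k j) ^ 2 := by
    intro ω
    rw [EuclideanSpace.norm_sq_eq, Fintype.sum_prod_type, Finset.mul_sum]
    refine Finset.sum_congr rfl fun i _ => ?_
    rw [Finset.mul_sum]
    refine Finset.sum_congr rfl fun j _ => ?_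
    have h1 : S ω (i, j) = lam * m * (Λh ω i j - Λ i j) := by
      rw [hΛh, hΛ]
      simp only [hS, hY1, hY2, feat, PiLp.add_apply, WithLp.ofLp_sum, Finset.sum_apply,
        WithLp.ofLp_neg, Pi.neg_apply, Matrix.smul_apply, Matrix.sub_apply, hK1h, hK2h,
        Finset.sum_neg_distrib, ← Finset.mul_sum, Finset.sum_sub_distrib, Finset.sum_const,
        Finset.card_univ, Fintype.card_fin, nsmul_eq_mul, smul_eq_mul]
      field_simp
      ring
    rw [h1, Real.norm_eq_abs, sq_abs]
    ring
  set G := {ω | ∑ i, ∑ k, (Λ.mulVec (vh ω i) k - lamh ω i * vh ω i k) ^ 2 ≤ 128 * L / m} with hG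
  have hbad : Gᶜ ⊆ {ω | ENNReal.ofReal (Real.exp (3 * L) / 2)
      ≤ ENNReal.ofReal (Real.cosh ‖S ω‖)} := by
    intro ω hω
    rw [hG, Set.mem_compl_iff, Set.mem_ofPred_eq, not_le,
      residual_sum_eq Λ (Λh ω) (vh ω) (lamh ω) (horth ω) (heig ω)] at hω
    refine ENNReal.ofReal_le_ofReal ?_
    have h1 : (3 * L) ^ 2 ≤ ‖S ω‖ ^ 2 := by
      rw [hnormS]
      calc (3 * L) ^ 2 ≤ lam ^ 2 * m ^ 2 * (128 * L / m) := by
            rw [hlam2]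
            field_simp
            norm_num
        _ ≤ _ := by gcongr
    have h2 : 3 * L ≤ ‖S ω‖ := le_of_sq_le_sq h1 (norm_nonneg _)
    rw [Real.cosh_eq]
    have := Real.exp_le_exp.2 h2
    have := Real.exp_pos (-‖S ω‖)
    linarith
  have hGc : (P1.prod P2) Gᶜ ≤ ENNReal.ofReal δ := by
    have hpos : (0 : ℝ) < Real.exp (3 * L) / 2 := by positivity
    have hmk := (meas_ge_le_lintegral_div (μ := P1.prod P2)
      (f := fun ω => ENNReal.ofReal (Real.cosh ‖S ω‖)) (by fun_prop)
      (ENNReal.ofReal_pos.2 hpos).ne' ENNReal.ofReal_ne_top)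
    refine (measure_mono hbad).trans (hmk.trans ?_)
    refine (ENNReal.div_le_div_right hmoment _).trans ?_
    rw [← ENNReal.ofReal_div_of_pos hpos]
    refine ENNReal.ofReal_le_ofReal (le_of_eq ?_)
    rw [show 3 * L = 2 * L + L by ring, Real.exp_add, hexpL]
    field_simp
  have hone : (1 : ENNReal) ≤ (P1.prod P2) G + (P1.prod P2) Gᶜ := by
    rw [← measure_univ (μ := P1.prod P2), ← Set.union_compl_self G]
    exact measure_union_le _ _
  rw [ENNReal.ofReal_sub _ hδ0.le, ENNReal.ofReal_one]
  exact tsub_le_iff_right.2 (hone.trans (by gcongr))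
end
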